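/- Let Ω ⊆ ℝ^d be open. Then the subalgebra 𝒢_c(Ω) of compactly supported generalized functions is dense in 𝒢(Ω) with respect to the sharp topology. -/

import Mathlib

open Filter MeasureTheory Metric Set
open scoped Topology BigOperators

noncomputable section

/-- Euclidean space ℝ^d. -/
abbrev Euc (d : ℕ) : Type := EuclideanSpace ℝ (Fin d)

variable {d : ℕ}

/-- "P ε holds for small ε". -/
def SmallE (P : ℝ → Prop) : Prop :=
  ∃ ε₀ : ℝ, 0 < ε₀ ∧ ∀ ε : ℝ, 0 < ε → ε < ε₀ → P ε

/-- Directional derivative ∂ₑ u in the direction e. -/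
def pderivDir {F : Type} [NormedAddCommGroup F] [NormedSpace ℝ F]
    (e : Euc d) (u : Euc d → F) : Euc d → F :=
  fun x => fderiv ℝ u x e

/-- Multi-index partial derivative ∂^α u. -/
def partialDeriv {F : Type} [NormedAddCommGroup F] [NormedSpace ℝ F]
    (α : Fin d → ℕ) (u : Euc d → F) : Euc d → F :=
  (List.finRange d).foldr
    (fun i v => (pderivDir (EuclideanSpace.single i (1 : ℝ)))^[α i] v) u

/-- p_{α,K}(u) = sup_{x ∈ K} |∂^α u(x)|. -/
def pSemi {F : Type} [NormedAddCommGroup F] [NormedSpace ℝ F]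
    (α : Fin d → ℕ) (K : Set (Euc d)) (u : Euc d → F) : ℝ :=
  sSup ((fun x => ‖partialDeriv α u x‖) '' K)

/-- p_{k,K}(u) = max_{|α| = k} p_{α,K}(u). -/
def pSemiK {F : Type} [NormedAddCommGroup F] [NormedSpace ℝ F]
    (k : ℕ) (K : Set (Euc d)) (u : Euc d → F) : ℝ :=
  sSup {y : ℝ | ∃ α : Fin d → ℕ, (∑ i, α i) = k ∧ y = pSemi α K u}

/-- Moderate nets of smooth functions on Ω. -/
def Moderate (Ω : Set (Euc d)) (u : ℝ → Euc d → ℂ) : Prop :=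
  (∀ ε ∈ Set.Ioo (0:ℝ) 1, ContDiffOn ℝ (⊤ : ℕ∞) (u ε) Ω) ∧
  ∀ K : Set (Euc d), IsCompact K → K ⊆ Ω → ∀ α : Fin d → ℕ,
    ∃ N : ℕ, SmallE fun ε => pSemi α K (u ε) ≤ ε ^ (-(N : ℝ))

/-- Negligible nets of smooth functions on Ω. -/
def Negligible (Ω : Set (Euc d)) (u : ℝ → Euc d → ℂ) : Prop :=
  (∀ ε ∈ Set.Ioo (0:ℝ) 1, ContDiffOn ℝ (⊤ : ℕ∞) (u ε) Ω) ∧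
  ∀ K : Set (Euc d), IsCompact K → K ⊆ Ω → ∀ α : Fin d → ℕ, ∀ m : ℕ,
    SmallE fun ε => pSemi α K (u ε) ≤ ε ^ (m : ℝ)

/-- The algebra of moderate nets. -/
abbrev ModNet (Ω : Set (Euc d)) : Type := {u : ℝ → Euc d → ℂ // Moderate Ω u}

/-- Two moderate nets are identified when their difference is negligible. -/
def nulRel (Ω : Set (Euc d)) (u v : ModNet Ω) : Prop :=
  Negligible Ω (fun ε x => u.1 ε x - v.1 ε x)

/-- The special Colombeau algebra 𝒢(Ω). -/
abbrev Colombeau (Ω : Set (Euc d)) : Type := Quot (nulRel Ω)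

/-- The valuation of a net of complex numbers, with values in EReal
(⊤ corresponding to nets with arbitrarily good decay). -/
def valuation (z : ℝ → ℂ) : EReal :=
  sSup ((fun b : ℝ => (b : EReal)) '' {b : ℝ | SmallE fun ε => ‖z ε‖ ≤ ε ^ b})

/-- The sharp norm e^{-v(z)} of a net of complex numbers. -/
def sharpNorm (z : ℝ → ℂ) : ℝ :=
  if valuation z = ⊤ then 0 else Real.exp (-(valuation z).toReal)

/-- P_{k,K}(u) = ‖(p_{k,K}(u_ε))_ε‖ (computed via a representative;
independent of the representative). -/
def PNorm (Ω : Set (Euc d)) (k : ℕ) (K : Set (Euc d)) (u : Colombeau Ω) : ℝ :=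
  sharpNorm fun ε => ((pSemiK k K ((Quot.out u).1 ε) : ℝ) : ℂ)

/-- P_{α,K}(u) = ‖(p_{α,K}(u_ε))_ε‖ for a multi-index α. -/
def PNormA (Ω : Set (Euc d)) (α : Fin d → ℕ) (K : Set (Euc d)) (u : Colombeau Ω) : ℝ :=
  sharpNorm fun ε => ((pSemi α K ((Quot.out u).1 ε) : ℝ) : ℂ)

/-- The ultra-pseudo-seminorm P_{α,K} applied to the difference u - v. -/
def PNormDiff (Ω : Set (Euc d)) (α : Fin d → ℕ) (K : Set (Euc d))
    (u v : Colombeau Ω) : ℝ :=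
  sharpNorm fun ε =>
    ((pSemi α K (fun x => (Quot.out u).1 ε x - (Quot.out v).1 ε x) : ℝ) : ℂ)

/-- The sharp topology on 𝒢(Ω): generated by the balls of the
ultra-pseudo-seminorms P_{α,K}. -/
def sharpTopology (Ω : Set (Euc d)) : TopologicalSpace (Colombeau Ω) :=
  TopologicalSpace.generateFrom
    {S | ∃ (u : Colombeau Ω) (α : Fin d → ℕ) (K : Set (Euc d)) (r : ℝ),
      IsCompact K ∧ K ⊆ Ω ∧ 0 < r ∧ S = {v | PNormDiff Ω α K u v < r}}

/-- K satisfies the segment condition: there is r > 0 such that every x ∈ K lies on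
d line segments of length r, in linearly independent (unit) directions, contained in K. -/
def SegmentCond (K : Set (Euc d)) : Prop :=
  ∃ r : ℝ, 0 < r ∧ ∀ x ∈ K, ∃ e : Fin d → Euc d, LinearIndependent ℝ e ∧
    ∀ i : Fin d, ‖e i‖ = 1 ∧ ∃ a : ℝ, a ≤ 0 ∧ 0 ≤ a + r ∧
      ∀ t : ℝ, a ≤ t → t ≤ a + r → x + t • e i ∈ K

/-- 𝒢^∞(K). -/
def GInfK (Ω : Set (Euc d)) (K : Set (Euc d)) : Set (Colombeau Ω) :=
  {u | ∃ v : ModNet Ω, Quot.mk (nulRel Ω) v = u ∧ ∃ N : ℕ,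
    ∀ α : Fin d → ℕ, SmallE fun ε => pSemi α K (v.1 ε) ≤ ε ^ (-(N : ℝ))}

/-- 𝒢^{L,a}(K), the generalized functions of sublinear growth with slope
smaller than a on K. -/
def GLaK (Ω : Set (Euc d)) (a : ℝ) (K : Set (Euc d)) : Set (Colombeau Ω) :=
  {u | ∃ v : ModNet Ω, Quot.mk (nulRel Ω) v = u ∧ ∃ a' : ℝ, a' < a ∧ ∃ b : ℝ,
    ∀ α : Fin d → ℕ,
      SmallE fun ε => pSemi α K (v.1 ε) ≤ ε ^ (-(a' * (∑ i, (α i : ℝ))) - b)}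

/-- 𝒢^{L,0}(K) = ⋂_{a>0} 𝒢^{L,a}(K). -/
def GL0K (Ω : Set (Euc d)) (K : Set (Euc d)) : Set (Colombeau Ω) :=
  {u | ∀ a : ℝ, 0 < a → u ∈ GLaK Ω a K}

/-- 𝒢^∞(Ω) = ⋂_{K⊂⊂Ω} 𝒢^∞(K). -/
def GInfOmega (Ω : Set (Euc d)) : Set (Colombeau Ω) :=
  {u | ∀ K : Set (Euc d), IsCompact K → K ⊆ Ω → u ∈ GInfK Ω K}

/-- 𝒢^{L,a}(Ω) = ⋂_{K⊂⊂Ω} 𝒢^{L,a}(K). -/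
def GLaOmega (Ω : Set (Euc d)) (a : ℝ) : Set (Colombeau Ω) :=
  {u | ∀ K : Set (Euc d), IsCompact K → K ⊆ Ω → u ∈ GLaK Ω a K}

/-- 𝒢^{L,0}(Ω) = ⋂_{K⊂⊂Ω} 𝒢^{L,0}(K). -/
def GL0Omega (Ω : Set (Euc d)) : Set (Colombeau Ω) :=
  {u | ∀ K : Set (Euc d), IsCompact K → K ⊆ Ω → u ∈ GL0K Ω K}

/-- u ∈ 𝒢(Ω) is sublinear. -/
def Sublinear (Ω : Set (Euc d)) (u : Colombeau Ω) : Prop :=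
  ∃ v : ModNet Ω, Quot.mk (nulRel Ω) v = u ∧
    ∀ K : Set (Euc d), IsCompact K → K ⊆ Ω →
      ∀ x : ℝ → Euc d, (∀ ε ∈ Set.Ioo (0:ℝ) 1, x ε ∈ K) →
        ∃ k : ℝ, ∃ p : ℕ → ℝ,
          Filter.Tendsto (fun n : ℕ => p n + k * n) atTop atTop ∧
          ∀ α : Fin d → ℕ,
            SmallE fun ε => ‖partialDeriv α (v.1 ε) (x ε)‖ ≤ ε ^ (p (∑ i, α i))

/-- The scaled mollifier ψ_δ(x) = δ^{-d} ψ(x/δ). -/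
def mollify (ψ : Euc d → ℝ) (δ : ℝ) : Euc d → ℝ :=
  fun x => ((δ : ℝ) ^ d)⁻¹ * ψ (δ⁻¹ • x)

/-- Convolution u ⋆ ψ (with a real-valued kernel ψ). -/
def conv (u : Euc d → ℂ) (ψ : Euc d → ℝ) : Euc d → ℂ :=
  fun x => ∫ t : Euc d, u (x - t) * ((ψ t : ℝ) : ℂ)

/-- 𝒢_c(Ω): compactly supported generalized functions (restriction to Ω∖K
is 0 in 𝒢(Ω∖K), i.e. some representative is negligible on Ω∖K). -/
def GCompact (Ω : Set (Euc d)) : Set (Colombeau Ω) :=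
  {u | ∃ v : ModNet Ω, Quot.mk (nulRel Ω) v = u ∧
    ∃ K : Set (Euc d), IsCompact K ∧ K ⊆ Ω ∧ Negligible (Ω \ K) v.1}

/-- Iterated partial derivatives along a list of coordinate directions. -/
def DL (L : List (Fin d)) (u : Euc d → ℂ) : Euc d → ℂ :=
  L.foldr (fun i v => pderivDir (EuclideanSpace.single i (1 : ℝ)) v) u

def lst (l : List (Fin d)) (α : Fin d → ℕ) : List (Fin d) :=
  l.flatMap fun i => List.replicate (α i) i

lemma foldr_replicate_aux {X : Type} (f : Fin d → X → X) (i : Fin d) (n : ℕ) (v : X) :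
    (List.replicate n i).foldr f v = (f i)^[n] v := by
  induction n with
  | zero => rfl
  | succ n ih =>
    rw [List.replicate_succ, List.foldr_cons, ih, Function.iterate_succ_apply']

lemma partialDeriv_eq (α : Fin d → ℕ) (u : Euc d → ℂ) :
    partialDeriv α u = DL (lst (List.finRange d) α) u := by
  unfold partialDeriv DL lst
  induction List.finRange d with
  | nil => rfl
  | cons i l ih =>
    rw [List.foldr_cons, ih, List.flatMap_cons, List.foldr_append, foldr_replicate_aux]

lemma sublist_lst (l : List (Fin d)) (hl : l.Nodup) (α : Fin d → ℕ) :
    ∀ L', L'.Sublist (lst l α) → ∃ β, L' = lst l β := by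
  induction l with
  | nil =>
    intro L' h
    refine ⟨α, ?_⟩
    simpa [lst] using h
  | cons i l ih =>
    intro L' h
    rw [List.nodup_cons] at hl
    unfold lst at h
    rw [List.flatMap_cons, List.sublist_append_iff] at h
    obtain ⟨L1, L2, rfl, h1, h2⟩ := h
    obtain ⟨n, -, rfl⟩ := List.sublist_replicate_iff.1 h1
    obtain ⟨β, rfl⟩ := ih hl.2 L2 h2
    refine ⟨Function.update β i n, ?_⟩
    unfold lst
    rw [List.flatMap_cons]
    congr 1
    · simp
    · apply List.flatMap_congr
      intro j hj
      have : j ≠ i := by rintro rfl; exact hl.1 hj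
      simp [this]

lemma pd_smooth {Ω : Set (Euc d)} (hΩ : IsOpen Ω) {u : Euc d → ℂ}
    (hu : ContDiffOn ℝ (⊤ : ℕ∞) u Ω) (e : Euc d) :
    ContDiffOn ℝ (⊤ : ℕ∞) (pderivDir e u) Ω := by
  have h := hu.fderiv_of_isOpen (m := ((⊤ : ℕ∞) : WithTop ℕ∞)) hΩ (by simp)
  exact h.clm_apply contDiffOn_const

lemma pd_congr {Ω : Set (Euc d)} (hΩ : IsOpen Ω) {u v : Euc d → ℂ}
    (h : EqOn u v Ω) (e : Euc d) : EqOn (pderivDir e u) (pderivDir e v) Ω := by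
  intro x hx
  have : u =ᶠ[𝓝 x] v := h.eventuallyEq_of_mem (hΩ.mem_nhds hx)
  unfold pderivDir
  rw [this.fderiv_eq]

lemma smooth_diff {Ω : Set (Euc d)} (hΩ : IsOpen Ω) {u : Euc d → ℂ}
    (hu : ContDiffOn ℝ (⊤ : ℕ∞) u Ω) {x : Euc d} (hx : x ∈ Ω) : DifferentiableAt ℝ u x :=
  (hu.contDiffAt (hΩ.mem_nhds hx)).differentiableAt (by simp)

lemma DL_smooth {Ω : Set (Euc d)} (hΩ : IsOpen Ω) {u : Euc d → ℂ}
    (hu : ContDiffOn ℝ (⊤ : ℕ∞) u Ω) (L : List (Fin d)) :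
    ContDiffOn ℝ (⊤ : ℕ∞) (DL L u) Ω := by
  induction L with
  | nil => exact hu
  | cons i L ih => exact pd_smooth hΩ ih _

lemma DL_congr {Ω : Set (Euc d)} (hΩ : IsOpen Ω) {u v : Euc d → ℂ}
    (h : EqOn u v Ω) (L : List (Fin d)) : EqOn (DL L u) (DL L v) Ω := by
  induction L with
  | nil => exact h
  | cons i L ih => exact pd_congr hΩ ih _

lemma DL_add {Ω : Set (Euc d)} (hΩ : IsOpen Ω) {u v : Euc d → ℂ}
    (hu : ContDiffOn ℝ (⊤ : ℕ∞) u Ω) (hv : ContDiffOn ℝ (⊤ : ℕ∞) v Ω) (L : List (Fin d)) :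
    EqOn (DL L (fun x => u x + v x)) (fun x => DL L u x + DL L v x) Ω := by
  induction L with
  | nil => intro x _; rfl
  | cons i L ih =>
    intro x hx
    have h := pd_congr hΩ ih (EuclideanSpace.single i (1 : ℝ)) hx
    refine h.trans ?_
    change fderiv ℝ (fun x => DL L u x + DL L v x) x _ = _
    rw [fderiv_fun_add (smooth_diff hΩ (DL_smooth hΩ hu L) hx)
      (smooth_diff hΩ (DL_smooth hΩ hv L) hx)]
    rfl

lemma DL_neg (u : Euc d → ℂ) (L : List (Fin d)) :
    DL L (fun x => - u x) = fun x => - DL L u x := by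
  induction L with
  | nil => rfl
  | cons i L ih =>
    change pderivDir _ (DL L (fun x => - u x)) = _
    rw [ih]
    funext x
    change fderiv ℝ (fun x => - DL L u x) x _ = _
    rw [fderiv_fun_neg]
    rfl

lemma DL_zero (L : List (Fin d)) : DL L (fun _ => 0) = fun _ => 0 := by
  induction L with
  | nil => rfl
  | cons i L ih =>
    change pderivDir _ (DL L (fun _ => 0)) = _
    rw [ih]
    funext x
    simp [pderivDir]

lemma smallE_iff (P : ℝ → Prop) : SmallE P ↔ ∀ᶠ ε in 𝓝[>] (0 : ℝ), P ε := by
  unfold SmallE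
  rw [Filter.Eventually, mem_nhdsGT_iff_exists_Ioo_subset]
  constructor
  · rintro ⟨a, ha, h⟩
    exact ⟨a, ha, fun x hx => h x hx.1 hx.2⟩
  · rintro ⟨a, ha, h⟩
    exact ⟨a, ha, fun x h1 h2 => h ⟨h1, h2⟩⟩

lemma ev_Ioo {a : ℝ} (ha : 0 < a) : ∀ᶠ ε in 𝓝[>] (0 : ℝ), ε ∈ Ioo (0 : ℝ) a :=
  Ioo_mem_nhdsGT ha

/-- uniform moderate bound on a set -/
def BK (K : Set (Euc d)) (w : ℝ → Euc d → ℂ) : Prop :=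
  ∃ N : ℕ, ∀ᶠ ε in 𝓝[>] (0 : ℝ), ∀ x ∈ K, ‖w ε x‖ ≤ ε ^ (-(N : ℝ))

lemma rpow_succ_aux {ε C : ℝ} (hC : 0 < C) (h0 : 0 < ε) (h1 : ε < C⁻¹) (N : ℕ) :
    C * ε ^ (-(N : ℝ)) ≤ ε ^ (-((N + 1 : ℕ) : ℝ)) := by
  have : ε ^ (-((N + 1 : ℕ) : ℝ)) = ε⁻¹ * ε ^ (-(N : ℝ)) := by
    rw [← Real.rpow_neg_one, ← Real.rpow_add h0]
    congr 1
    push_cast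
    ring
  rw [this]
  have h2 : C ≤ ε⁻¹ := by
    rw [le_inv_comm₀ hC h0]
    exact h1.le
  gcongr

lemma BK_add {K : Set (Euc d)} {u v : ℝ → Euc d → ℂ} (hu : BK K u) (hv : BK K v) :
    BK K (fun ε x => u ε x + v ε x) := by
  obtain ⟨N, hN⟩ := hu
  obtain ⟨M, hM⟩ := hv
  refine ⟨max N M + 1, ?_⟩
  filter_upwards [hN, hM, ev_Ioo (a := (2 : ℝ)⁻¹) (by norm_num)] with ε h1 h2 h3 x hx
  refine le_trans ?_ (rpow_succ_aux (by norm_num : (0 : ℝ) < 2) h3.1 h3.2 _)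
  have hle : ε ≤ 1 := h3.2.le.trans (by norm_num)
  have e1 : ε ^ (-(N : ℝ)) ≤ ε ^ (-((max N M : ℕ) : ℝ)) :=
    Real.rpow_le_rpow_of_exponent_ge h3.1 hle (by simp)
  have e2 : ε ^ (-(M : ℝ)) ≤ ε ^ (-((max N M : ℕ) : ℝ)) :=
    Real.rpow_le_rpow_of_exponent_ge h3.1 hle (by simp)
  have := norm_add_le (u ε x) (v ε x)
  linarith [h1 x hx, h2 x hx]

lemma BK_congr {K : Set (Euc d)} {u v : ℝ → Euc d → ℂ} (hu : BK K u)
    (h : ∀ ε ∈ Ioo (0 : ℝ) 1, EqOn (u ε) (v ε) K) : BK K v := by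
  obtain ⟨N, hN⟩ := hu
  refine ⟨N, ?_⟩
  filter_upwards [hN, ev_Ioo one_pos] with ε h1 h2 x hx
  rw [← h ε h2 hx]
  exact h1 x hx

lemma BK_mul {Ω K : Set (Euc d)} (hΩ : IsOpen Ω) (hK : IsCompact K) (hKΩ : K ⊆ Ω)
    (L : List (Fin d)) : ∀ (c : Euc d → ℂ) (u : ℝ → Euc d → ℂ),
    ContDiffOn ℝ (⊤ : ℕ∞) c Ω →
    (∀ ε ∈ Ioo (0 : ℝ) 1, ContDiffOn ℝ (⊤ : ℕ∞) (u ε) Ω) →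
    (∀ L', L'.Sublist L → BK K (fun ε => DL L' (u ε))) →
    BK K (fun ε => DL L (fun x => c x * u ε x)) := by
  induction L using List.reverseRecOn with
  | nil =>
    intro c u hc hu h
    obtain ⟨N, hN⟩ := h [] (List.Sublist.refl _)
    obtain ⟨C, hC⟩ := hK.exists_bound_of_continuousOn (hc.continuousOn.mono hKΩ)
    have hC0 : 0 < max C 1 := lt_max_of_lt_right one_pos
    refine ⟨N + 1, ?_⟩
    filter_upwards [hN, ev_Ioo (inv_pos.2 hC0)] with ε h1 h2 x hx
    refine le_trans ?_ (rpow_succ_aux hC0 h2.1 h2.2 _)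
    change ‖c x * u ε x‖ ≤ _
    rw [norm_mul]
    exact mul_le_mul ((hC x hx).trans (le_max_left _ _)) (h1 x hx) (norm_nonneg _) hC0.le
  | append_singleton L i ih =>
    intro c u hc hu h
    set e : Euc d := EuclideanSpace.single i (1 : ℝ) with he
    have happ : ∀ (L : List (Fin d)) (w : Euc d → ℂ), DL (L ++ [i]) w = DL L (pderivDir e w) := by
      intro L w
      simp [DL, he]
    have A := ih (pderivDir e c) u (pd_smooth hΩ hc e) hu
      (fun L' hL' => h L' (hL'.trans (List.sublist_append_left _ _)))
    have B := ih c (fun ε => pderivDir e (u ε)) hc (fun ε hε => pd_smooth hΩ (hu ε hε) e) (by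
      intro L' hL'
      have := h (L' ++ [i]) (hL'.append (List.Sublist.refl _))
      simpa only [happ] using this)
    refine BK_congr (BK_add A B) ?_
    intro ε hε x hx
    simp only [happ]
    have s1 : ContDiffOn ℝ (⊤ : ℕ∞) (fun x => pderivDir e c x * u ε x) Ω :=
      (pd_smooth hΩ hc e).mul (hu ε hε)
    have s2 : ContDiffOn ℝ (⊤ : ℕ∞) (fun x => c x * pderivDir e (u ε) x) Ω :=
      hc.mul (pd_smooth hΩ (hu ε hε) e)
    refine (DL_add hΩ s1 s2 L (hKΩ hx)).symm.trans ?_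
    apply DL_congr hΩ _ L (hKΩ hx)
    intro y hy
    change _ = fderiv ℝ (fun x => c x * u ε x) y e
    rw [fderiv_fun_mul (smooth_diff hΩ hc hy) (smooth_diff hΩ (hu ε hε) hy)]
    simp [pderivDir]
    ring

lemma pSemi_nonneg (α : Fin d → ℕ) (K : Set (Euc d)) (u : Euc d → ℂ) : 0 ≤ pSemi α K u := by
  apply Real.sSup_nonneg
  rintro _ ⟨x, -, rfl⟩
  exact norm_nonneg _

lemma pSemi_le {α : Fin d → ℕ} {K : Set (Euc d)} {u : Euc d → ℂ} {c : ℝ} (hc : 0 ≤ c)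
    (h : ∀ x ∈ K, ‖partialDeriv α u x‖ ≤ c) : pSemi α K u ≤ c := by
  apply Real.sSup_le _ hc
  rintro _ ⟨x, hx, rfl⟩
  exact h x hx

lemma le_pSemi {Ω K : Set (Euc d)} (hΩ : IsOpen Ω) (hK : IsCompact K) (hKΩ : K ⊆ Ω)
    {u : Euc d → ℂ} (hu : ContDiffOn ℝ (⊤ : ℕ∞) u Ω) (α : Fin d → ℕ) {x : Euc d} (hx : x ∈ K) :
    ‖partialDeriv α u x‖ ≤ pSemi α K u := by
  apply le_csSup _ (mem_image_of_mem _ hx)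
  apply IsCompact.bddAbove
  apply hK.image_of_continuousOn
  rw [partialDeriv_eq]
  exact ((DL_smooth hΩ hu _).continuousOn.mono hKΩ).norm

lemma pSemi_add {Ω K : Set (Euc d)} (hΩ : IsOpen Ω) (hK : IsCompact K) (hKΩ : K ⊆ Ω)
    {u v : Euc d → ℂ} (hu : ContDiffOn ℝ (⊤ : ℕ∞) u Ω) (hv : ContDiffOn ℝ (⊤ : ℕ∞) v Ω)
    (α : Fin d → ℕ) :
    pSemi α K (fun x => u x + v x) ≤ pSemi α K u + pSemi α K v := by
  apply pSemi_le (add_nonneg (pSemi_nonneg _ _ _) (pSemi_nonneg _ _ _))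
  intro x hx
  have h1 := le_pSemi hΩ hK hKΩ hu α hx
  have h2 := le_pSemi hΩ hK hKΩ hv α hx
  rw [partialDeriv_eq] at h1 h2 ⊢
  rw [DL_add hΩ hu hv _ (hKΩ hx)]
  exact (norm_add_le _ _).trans (add_le_add h1 h2)

lemma pSemi_tri {Ω K : Set (Euc d)} (hΩ : IsOpen Ω) (hK : IsCompact K) (hKΩ : K ⊆ Ω)
    {u v w : Euc d → ℂ} (hu : ContDiffOn ℝ (⊤ : ℕ∞) u Ω) (hv : ContDiffOn ℝ (⊤ : ℕ∞) v Ω)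
    (hw : ContDiffOn ℝ (⊤ : ℕ∞) w Ω) (α : Fin d → ℕ) :
    pSemi α K (fun x => u x - w x) ≤
      pSemi α K (fun x => u x - v x) + pSemi α K (fun x => v x - w x) := by
  have := pSemi_add hΩ hK hKΩ (hu.sub hv) (hv.sub hw) α
  have e : (fun x => u x - w x) = fun x => (u x - v x) + (v x - w x) := by
    funext x; ring
  rw [e]
  exact this

lemma pSemi_symm (α : Fin d → ℕ) (K : Set (Euc d)) (u v : Euc d → ℂ) :
    pSemi α K (fun x => u x - v x) = pSemi α K (fun x => v x - u x) := by
  have e : (fun x => u x - v x) = fun x => -(v x - u x) := by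
    funext x; ring
  unfold pSemi
  rw [e]
  simp only [partialDeriv_eq, DL_neg, norm_neg]

lemma pSemi_congr {U K : Set (Euc d)} (hU : IsOpen U) (hKU : K ⊆ U) {u v : Euc d → ℂ}
    (h : EqOn u v U) (α : Fin d → ℕ) : pSemi α K u = pSemi α K v := by
  unfold pSemi
  congr 1
  apply image_congr
  intro x hx
  rw [partialDeriv_eq, partialDeriv_eq, DL_congr hU h _ (hKU hx)]

lemma pSemi_zero (α : Fin d → ℕ) (K : Set (Euc d)) : pSemi α K (fun _ => (0 : ℂ)) = 0 := by
  apply le_antisymm _ (pSemi_nonneg _ _ _)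
  apply pSemi_le le_rfl
  intro x _
  rw [partialDeriv_eq, DL_zero]
  simp

lemma smallE_rpow (m : ℕ) : SmallE fun ε => (0 : ℝ) ≤ ε ^ (m : ℝ) :=
  ⟨1, one_pos, fun _ h _ => Real.rpow_nonneg h.le _⟩

lemma nulRel_equiv {Ω : Set (Euc d)} (hΩ : IsOpen Ω) : Equivalence (nulRel Ω) where
  refl u := by
    refine ⟨fun ε hε => (u.2.1 ε hε).sub (u.2.1 ε hε), ?_⟩
    intro K hK hKΩ α m
    simp only [sub_self, pSemi_zero]
    exact smallE_rpow m
  symm := by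
    intro u v h
    refine ⟨fun ε hε => (v.2.1 ε hε).sub (u.2.1 ε hε), ?_⟩
    intro K hK hKΩ α m
    have := h.2 K hK hKΩ α m
    simpa only [pSemi_symm α K (u.1 _)] using this
  trans := by
    intro u v w h1 h2
    refine ⟨fun ε hε => (u.2.1 ε hε).sub (w.2.1 ε hε), ?_⟩
    intro K hK hKΩ α m
    have a1 := h1.2 K hK hKΩ α (m + 1)
    have a2 := h2.2 K hK hKΩ α (m + 1)
    rw [smallE_iff] at a1 a2 ⊢
    filter_upwards [a1, a2, ev_Ioo (a := (2 : ℝ)⁻¹) (by norm_num)] with ε b1 b2 hε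
    have hε1 : ε ∈ Ioo (0 : ℝ) 1 := ⟨hε.1, hε.2.trans (by norm_num)⟩
    refine (pSemi_tri hΩ hK hKΩ (u.2.1 ε hε1) (v.2.1 ε hε1) (w.2.1 ε hε1) α).trans ?_
    have e : ε ^ ((m + 1 : ℕ) : ℝ) = ε ^ (m : ℝ) * ε := by
      push_cast
      rw [Real.rpow_add hε.1, Real.rpow_one]
    rw [e] at b1 b2
    have p : 0 ≤ ε ^ (m : ℝ) := Real.rpow_nonneg hε.1.le _
    have q : ε ≤ 2⁻¹ := hε.2.le
    nlinarith

lemma valuation_mono (z w : ℝ → ℝ) (hz : ∀ ε, 0 ≤ z ε) (hw : ∀ ε, 0 ≤ w ε)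
    (h : ∀ m : ℕ, ∀ᶠ ε in 𝓝[>] (0 : ℝ), w ε ≤ z ε + ε ^ (m : ℝ)) :
    valuation (fun ε => (z ε : ℂ)) ≤ valuation (fun ε => (w ε : ℂ)) := by
  apply sSup_le
  rintro _ ⟨b, hb, rfl⟩
  apply le_of_forall_lt
  intro c hc
  obtain ⟨c', hc1, hc2⟩ := EReal.lt_iff_exists_real_btwn.1 hc
  refine lt_of_lt_of_le hc1 ?_
  apply le_sSup
  refine ⟨c', ?_, rfl⟩
  have hcb : c' < b := EReal.coe_lt_coe_iff.1 hc2
  obtain ⟨m, hm⟩ := exists_nat_ge b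
  change SmallE _
  change SmallE _ at hb
  rw [smallE_iff] at hb ⊢
  have ht : Tendsto (fun ε : ℝ => ε ^ (b - c')) (𝓝[>] 0) (𝓝 0) := by
    have : ContinuousAt (fun ε : ℝ => ε ^ (b - c')) 0 :=
      Real.continuousAt_rpow_const _ _ (Or.inr (sub_pos.2 hcb).le)
    have h2 := this.tendsto
    simp only [Real.zero_rpow (sub_pos.2 hcb).ne'] at h2
    exact h2.mono_left nhdsWithin_le_nhds
  have ht2 := ht.eventually (gt_mem_nhds (show (0 : ℝ) < 2⁻¹ by norm_num))
  filter_upwards [hb, h m, ht2, ev_Ioo one_pos] with ε h1 h2 h3 h4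
  rw [Complex.norm_real, Real.norm_of_nonneg (hz ε)] at h1
  rw [Complex.norm_real, Real.norm_of_nonneg (hw ε)]
  have e1 : ε ^ (m : ℝ) ≤ ε ^ b := Real.rpow_le_rpow_of_exponent_ge h4.1 h4.2.le hm
  have e2 : ε ^ b = ε ^ c' * ε ^ (b - c') := by
    rw [← Real.rpow_add h4.1]; congr 1; ring
  have p : 0 ≤ ε ^ c' := Real.rpow_nonneg h4.1.le _
  nlinarith

lemma moderate_mul {Ω : Set (Euc d)} (hΩ : IsOpen Ω) {c : Euc d → ℂ} {u : ℝ → Euc d → ℂ}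
    (hc : ContDiffOn ℝ (⊤ : ℕ∞) c Ω) (hu : Moderate Ω u) :
    Moderate Ω (fun ε x => c x * u ε x) := by
  refine ⟨fun ε hε => hc.mul (hu.1 ε hε), ?_⟩
  intro K hK hKΩ α
  obtain ⟨N, hN⟩ := BK_mul hΩ hK hKΩ (lst (List.finRange d) α) c u hc hu.1 (by
    intro L' hL'
    obtain ⟨β, rfl⟩ := sublist_lst _ (List.nodup_finRange d) α L' hL'
    obtain ⟨N, hN⟩ := hu.2 K hK hKΩ β
    rw [smallE_iff] at hN
    refine ⟨N, ?_⟩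
    filter_upwards [hN, ev_Ioo one_pos] with ε h1 h2 x hx
    rw [← partialDeriv_eq]
    exact (le_pSemi hΩ hK hKΩ (hu.1 ε h2) β hx).trans h1)
  refine ⟨N, ?_⟩
  rw [smallE_iff]
  filter_upwards [hN, ev_Ioo one_pos] with ε h1 h2
  apply pSemi_le (Real.rpow_nonneg h2.1.le _)
  intro x hx
  rw [partialDeriv_eq]
  exact h1 x hx

lemma exists_cutoff {Ω K : Set (Euc d)} (hΩ : IsOpen Ω) (hK : IsCompact K) (hKΩ : K ⊆ Ω) :
    ∃ (c : Euc d → ℂ) (U K' : Set (Euc d)), ContDiffOn ℝ (⊤ : ℕ∞) c Ω ∧ IsOpen U ∧ K ⊆ U ∧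
      (∀ x ∈ U, c x = 1) ∧ IsCompact K' ∧ K' ⊆ Ω ∧ ∀ x ∉ K', c x = 0 := by
  obtain ⟨K', hK', h1, h2⟩ := exists_compact_between hK hΩ hKΩ
  obtain ⟨f, hf1, hf2, -⟩ := exists_contMDiffMap_one_nhds_of_subset_interior
    (n := (⊤ : ℕ∞)) (modelWithCornersSelf ℝ (Euc d)) hK.isClosed h1
  obtain ⟨U, hU, hKU, hU1⟩ := mem_nhdsSet_iff_exists.1 hf1
  refine ⟨fun x => (f x : ℂ), U, K', ?_, hU, hKU, ?_, hK', h2, ?_⟩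
  · have : ContDiff ℝ (⊤ : ℕ∞) (f : Euc d → ℝ) := f.contMDiff.contDiff
    exact (Complex.ofRealCLM.contDiff.comp this).contDiffOn
  · intro x hx
    have : f x = 1 := hU1 hx
    simp [this]
  · intro x hx
    simp [hf2 x hx]

/-- 𝒢_c(Ω) is dense in 𝒢(Ω) for the sharp topology. -/
theorem GCompact_dense {d : ℕ} (Ω : Set (Euc d)) (hΩ : IsOpen Ω) :
    @Dense (Colombeau Ω) (sharpTopology Ω) (GCompact Ω) := by
  letI := sharpTopology Ω
  intro u
  have hB := TopologicalSpace.isTopologicalBasis_of_subbasis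
    (t := sharpTopology Ω) (α := Colombeau Ω) rfl
  rw [hB.mem_closure_iff]
  rintro _ ⟨F, ⟨hFfin, hF⟩, rfl⟩ huF
  have hF' : ∀ S : Set (Colombeau Ω), S ∈ F → ∃ (u : Colombeau Ω) (α : Fin d → ℕ)
      (K : Set (Euc d)) (r : ℝ), IsCompact K ∧ K ⊆ Ω ∧ 0 < r ∧
        S = {v | PNormDiff Ω α K u v < r} := fun S hS => hF hS
  have hne : Nonempty (Colombeau Ω) := ⟨u⟩
  choose! ctr α K r hK hKΩ hr hS using hF'
  have hKc : IsCompact (⋃ S ∈ F, K S) := hFfin.isCompact_biUnion fun S hS => hK S hS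
  obtain ⟨c, U, K', hc, hU, hKU, hc1, hK', hK'Ω, hc0⟩ :=
    exists_cutoff hΩ hKc (iUnion₂_subset fun S hS => hKΩ S hS)
  let a : ModNet Ω := ⟨fun ε x => c x * (Quot.out u).1 ε x, moderate_mul hΩ hc (Quot.out u).2⟩
  refine ⟨Quot.mk _ a, ?_, a, rfl, K', hK', hK'Ω, ?_⟩
  · intro S hSF
    have hu := huF S hSF
    have hKS : K S ⊆ U := (subset_biUnion_of_mem (u := fun S => K S) hSF).trans hKU
    rw [hS S hSF] at hu ⊢
    rw [mem_setOf_eq] at hu ⊢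
    refine lt_of_eq_of_lt ?_ hu
    set b := Quot.out (Quot.mk (nulRel Ω) a) with hb
    have hnul : nulRel Ω a b := by
      have : Quot.mk (nulRel Ω) a = Quot.mk (nulRel Ω) b := (Quot.out_eq _).symm
      exact (nulRel_equiv hΩ).eqvGen_iff.1 (Quot.eqvGen_exact this)
    have hsmall : ∀ m : ℕ, ∀ᶠ ε in 𝓝[>] (0 : ℝ),
        pSemi (α S) (K S) (fun x => (Quot.out u).1 ε x - b.1 ε x) ≤ ε ^ (m : ℝ) := by
      intro m
      have h1 := hnul.2 (K S) (hK S hSF) (hKΩ S hSF) (α S) m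
      rw [smallE_iff] at h1
      filter_upwards [h1] with ε h2
      refine le_of_eq_of_le (pSemi_congr hU hKS ?_ _) h2
      intro x hx
      simp [a, hc1 x hx]
    unfold PNormDiff sharpNorm
    have hv : valuation (fun ε => ((pSemi (α S) (K S)
          (fun x => (Quot.out (ctr S)).1 ε x - b.1 ε x) : ℝ) : ℂ)) =
        valuation (fun ε => ((pSemi (α S) (K S)
          (fun x => (Quot.out (ctr S)).1 ε x - (Quot.out u).1 ε x) : ℝ) : ℂ)) := by
      apply le_antisymm
      · apply valuation_mono _ _ (fun _ => pSemi_nonneg _ _ _) (fun _ => pSemi_nonneg _ _ _)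
        intro m
        filter_upwards [hsmall m, ev_Ioo one_pos] with ε h1 hε
        have := pSemi_tri hΩ (hK S hSF) (hKΩ S hSF) ((Quot.out (ctr S)).2.1 ε hε)
          (b.2.1 ε hε) ((Quot.out u).2.1 ε hε) (α S)
        rw [pSemi_symm _ _ (b.1 ε)] at this
        linarith
      · apply valuation_mono _ _ (fun _ => pSemi_nonneg _ _ _) (fun _ => pSemi_nonneg _ _ _)
        intro m
        filter_upwards [hsmall m, ev_Ioo one_pos] with ε h1 hε
        have := pSemi_tri hΩ (hK S hSF) (hKΩ S hSF) ((Quot.out (ctr S)).2.1 ε hε)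
          ((Quot.out u).2.1 ε hε) (b.2.1 ε hε) (α S)
        linarith
    rw [hv]
  · have hO : IsOpen (Ω \ K') := hΩ.sdiff hK'.isClosed
    refine ⟨fun ε hε => (a.2.1 ε hε).mono diff_subset, ?_⟩
    intro K₁ _ hK₁ β m
    have : ∀ ε, pSemi β K₁ (a.1 ε) = 0 := by
      intro ε
      rw [← pSemi_zero β K₁]
      apply pSemi_congr hO hK₁
      intro x hx
      simp [a, hc0 x hx.2]
    simp only [this]
    exact smallE_rpow m

end
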